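/- For 0 < Im(z) < Im(τ), the partial fraction decomposition −η(τ)⁶ ζ^{−1}/θ(z;τ)² = ∑_{n∈ℤ} q^{n²+n}/(1−ζq^n)² + 2∑_{n∈ℤ} n q^{n²+n}/(1−ζq^n) holds. -/

import Mathlib

open Complex

/-- The Jacobi theta function
`θ(z;τ) = -i ζ^{-1/2} q^{1/8} (q;q)_∞ (ζ;q)_∞ (ζ⁻¹q;q)_∞`. -/
noncomputable def jtheta (z τ : ℂ) : ℂ :=
  -I * Complex.exp (-(Real.pi : ℂ) * I * z) * Complex.exp ((Real.pi : ℂ) * I * τ / 4) *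
    (∏' j : ℕ, (1 - Complex.exp (2 * (Real.pi : ℂ) * I * τ) ^ (j + 1))) *
    (∏' j : ℕ, (1 - Complex.exp (2 * (Real.pi : ℂ) * I * z) *
      Complex.exp (2 * (Real.pi : ℂ) * I * τ) ^ j)) *
    (∏' j : ℕ, (1 - Complex.exp (-2 * (Real.pi : ℂ) * I * z) *
      Complex.exp (2 * (Real.pi : ℂ) * I * τ) ^ (j + 1)))

/-- The Dedekind eta function `η(τ) = q^{1/24} ∏_{n≥1} (1 - q^n)`. -/
noncomputable def dedekindEta (τ : ℂ) : ℂ :=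
  Complex.exp ((Real.pi : ℂ) * I * τ / 12) *
    ∏' n : ℕ, (1 - Complex.exp (2 * (Real.pi : ℂ) * I * τ) ^ (n + 1))

/-!
Put `P(ζ) = (ζ;q)_∞ (q/ζ;q)_∞` and let `S(ζ)` be the sum of the two series. Shifting the summation
index by one gives `S(ζq) = ζ² S(ζ)` up to the series `∑ (2n - 1) q^{n²-n}` and `2ζ ∑ n q^{n²}`,
which vanish because their terms are odd under `n ↦ 1 - n` and `n ↦ -n`. As `ζ P(ζq) = -P(ζ)`, the
product `P² S` is invariant under `ζ ↦ ζq`. The double zeros of `P²` at the powers of `q` cancel the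
double poles of `S`, so `P² S` extends holomorphically to `ℂ ∖ {0}`, hence to the compact torus
`ℂˣ / q^ℤ`, and is constant by Liouville's theorem. Its value at `ζ = 1`, where only the term
`n = 0` contributes, is `(q;q)_∞⁴`.
-/

open Filter Topology
open scoped Real

lemma tsum_eq_zero_of_comp_equiv_eq_neg {α E : Type*} [AddCommGroup E] [IsAddTorsionFree E]
    [TopologicalSpace E] [IsTopologicalAddGroup E] [T2Space E] {f : α → E} (e : α ≃ α)
    (hf : ∀ x, f (e x) = -f x) : ∑' x, f x = 0 := by
  refine self_eq_neg.1 ?_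
  rw [← tsum_neg, ← e.tsum_eq f]
  exact tsum_congr hf

section GroupWithZero

variable {G : Type*} [GroupWithZero G] {q : G}

lemma exists_mul_self_mul_zpow_eq_one_iff {ζ : G} (hq0 : q ≠ 0) :
    (∃ n : ℤ, ζ * q * q ^ n = 1) ↔ ∃ n : ℤ, ζ * q ^ n = 1 := by
  simp only [mul_assoc, ← zpow_one_add₀ hq0]
  exact ((Equiv.addLeft (1 : ℤ)).surjective.exists (p := fun n ↦ ζ * q ^ n = 1)).symm

lemma apply_mul_zpow_of_apply_mul {α : Type*} (hq0 : q ≠ 0) {f : G → α}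
    (hf : ∀ x ≠ 0, f (x * q) = f x) (k : ℤ) {x : G} (hx : x ≠ 0) : f (x * q ^ k) = f x := by
  induction k with
  | zero => rw [zpow_zero, mul_one]
  | succ i ih => rw [zpow_add_one₀ hq0, ← mul_assoc, hf _ (mul_ne_zero hx (zpow_ne_zero _ hq0)), ih]
  | pred i ih =>
    rw [← hf _ (mul_ne_zero hx (zpow_ne_zero _ hq0)), mul_assoc, ← zpow_add_one₀ hq0,
      sub_add_cancel, ih]

end GroupWithZero

section NormedDivisionRing

variable {K : Type*} [NormedDivisionRing K] {q ζ : K}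

lemma zpow_ne_one_of_norm_lt_one (hq0 : q ≠ 0) (hq1 : ‖q‖ < 1) {n : ℤ} (hn : n ≠ 0) :
    q ^ n ≠ 1 := fun h ↦
  hn <| zpow_right_injective₀ (norm_pos_iff.2 hq0) hq1.ne <| by
    simp only [zpow_zero, ← norm_zpow, h, norm_one]

lemma summable_norm_neg_mul_pow (hq1 : ‖q‖ < 1) (a : K) :
    Summable fun j : ℕ ↦ ‖-(a * q ^ j)‖ := by
  simpa only [norm_neg, norm_mul, norm_pow] using
    (summable_geometric_of_lt_one (norm_nonneg q) hq1).mul_left ‖a‖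

lemma exists_one_le_norm_mul_zpow_le (hq0 : q ≠ 0) (hq1 : ‖q‖ < 1) (hζ : ζ ≠ 0) :
    ∃ n : ℤ, 1 ≤ ‖ζ * q ^ n‖ ∧ ‖ζ * q ^ n‖ ≤ ‖q‖⁻¹ := by
  have hpos : 0 < ‖q‖ := norm_pos_iff.2 hq0
  obtain ⟨n, hlow, hhigh⟩ :=
    exists_mem_Ico_zpow (norm_pos_iff.2 hζ) ((one_lt_inv₀ hpos).2 hq1)
  rw [zpow_add_one₀ (inv_ne_zero hpos.ne')] at hhigh
  rw [inv_zpow] at hlow hhigh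
  refine ⟨n, ?_, ?_⟩
  · rwa [norm_mul, norm_zpow, ← inv_le_iff_one_le_mul₀ (by positivity)]
  · rw [norm_mul, norm_zpow, ← le_div_iff₀ (by positivity), div_eq_inv_mul]
    exact hhigh.le

lemma eventually_le_norm_one_sub_mul_zpow (hq0 : q ≠ 0) (hq1 : ‖q‖ < 1) (hζ : ζ ≠ 0)
    {c : ℝ} (hc : c < 1) : ∀ᶠ p : K × ℤ in 𝓝 ζ ×ˢ cofinite, c ≤ ‖1 - p.1 * q ^ p.2‖ := by
  have hpos : 0 < ‖q‖ := norm_pos_iff.2 hq0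
  have hnorm (l : Filter ℤ) : Tendsto (fun p : K × ℤ ↦ ‖p.1‖) (𝓝 ζ ×ˢ l) (𝓝 ‖ζ‖) :=
    tendsto_fst.norm
  rw [Int.cofinite_eq, prod_sup, eventually_sup]
  constructor
  · have hq : Tendsto (fun n : ℤ ↦ ‖q‖ ^ n) atBot atTop := by
      simpa only [Function.comp_def, id_eq, Real.rpow_intCast] using
        (tendsto_rpow_atBot_of_base_lt_one ‖q‖ hpos hq1).comp
          (tendsto_intCast_atBot_iff.2 tendsto_id)
    have hlarge := (hnorm atBot).pos_mul_atTop (norm_pos_iff.2 hζ) (hq.comp tendsto_snd)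
    filter_upwards [hlarge.eventually_ge_atTop (1 + c)] with p hp
    have := norm_sub_norm_le (p.1 * q ^ p.2) 1
    rw [norm_sub_rev, norm_mul, norm_zpow, norm_one] at this
    simp only [Function.comp_apply] at hp
    linarith
  · have hq : Tendsto (fun n : ℤ ↦ ‖q‖ ^ n) atTop (𝓝 0) := by
      simpa only [Function.comp_def, Real.rpow_intCast] using
        (tendsto_rpow_atTop_of_base_lt_one ‖q‖ (by linarith) hq1).comp
          tendsto_intCast_atTop_atTop
    have hsmall := (hnorm atTop).mul (hq.comp tendsto_snd)
    rw [mul_zero] at hsmall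
    filter_upwards [hsmall.eventually_le_const (sub_pos.2 hc)] with p hp
    have := norm_sub_norm_le 1 (p.1 * q ^ p.2)
    rw [norm_mul, norm_zpow, norm_one] at this
    simp only [Function.comp_apply] at hp
    linarith

lemma exists_pos_eventually_le_norm_one_sub_mul_zpow (hq0 : q ≠ 0) (hq1 : ‖q‖ < 1) (hζ : ζ ≠ 0)
    {s : Set ℤ} (hs : ∀ n ∈ s, ζ * q ^ n ≠ 1) :
    ∃ c > 0, ∀ᶠ ξ in 𝓝 ζ, ∀ n ∈ s, c ≤ ‖1 - ξ * q ^ n‖ := by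
  obtain ⟨near, hnear, far, hfar, hbound⟩ :=
    eventually_prod_iff.1 (eventually_le_norm_one_sub_mul_zpow hq0 hq1 hζ one_half_lt_one)
  have hfin : {n | n ∈ s ∧ ¬far n}.Finite := hfar.subset fun n hn ↦ hn.2
  obtain ⟨c, hcs, hc2, hc0⟩ : ∃ c : ℝ, (∀ n ∈ {n | n ∈ s ∧ ¬far n}, c < ‖1 - ζ * q ^ n‖) ∧
      c < 1 / 2 ∧ 0 < c := by
    have hcs : ∀ᶠ c in 𝓝 (0 : ℝ), ∀ n ∈ {n | n ∈ s ∧ ¬far n}, c < ‖1 - ζ * q ^ n‖ :=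
      (eventually_all_finite hfin).2 fun n hn ↦
        eventually_lt_nhds (norm_pos_iff.2 (sub_ne_zero.2 (hs n hn.1).symm))
    have hsmall := (hcs.and (eventually_lt_nhds one_half_pos)).filter_mono
      (nhdsWithin_le_nhds (s := Set.Ioi 0))
    obtain ⟨c, ⟨hcs, hc2⟩, hc0⟩ := (hsmall.and self_mem_nhdsWithin).exists
    exact ⟨c, hcs, hc2, hc0⟩
  have hcont (n : ℤ) (hn : n ∈ {n | n ∈ s ∧ ¬far n}) : ∀ᶠ ξ in 𝓝 ζ, c < ‖1 - ξ * q ^ n‖ :=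
    have : ContinuousAt (fun ξ ↦ ‖1 - ξ * q ^ n‖) ζ := by fun_prop
    Tendsto.eventually_const_lt (hcs n hn) this
  refine ⟨c, hc0, ?_⟩
  filter_upwards [hnear, (eventually_all_finite hfin).2 hcont] with ξ hξ hξs n hn
  by_cases hn' : far n
  · exact hc2.le.trans (hbound hξ hn')
  · exact (hξs n ⟨hn, hn'⟩).le

end NormedDivisionRing

section PartialFractions

variable {q ζ : ℂ}

lemma apply_eq_apply_of_apply_mul_self {E : Type*} [NormedAddCommGroup E] [NormedSpace ℂ E]
    (hq0 : q ≠ 0) (hq1 : ‖q‖ < 1) {f : ℂ → E}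
    (hd : ∀ x ≠ 0, DifferentiableAt ℂ f x) (hf : ∀ x ≠ 0, f (x * q) = f x)
    {ξ : ℂ} (hζ : ζ ≠ 0) (hξ : ξ ≠ 0) : f ζ = f ξ := by
  set A : Set ℂ := Metric.closedBall 0 ‖q‖⁻¹ \ Metric.ball 0 1
  have hA : IsCompact A := (isCompact_closedBall 0 _).diff Metric.isOpen_ball
  have hA0 (x : ℂ) (hx : x ∈ A) : x ≠ 0 := by
    rintro rfl
    exact hx.2 (Metric.mem_ball_self one_pos)
  have hbdd : Bornology.IsBounded (f '' A) :=
    (hA.image_of_continuousOn fun x hx ↦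
      (hd x (hA0 x hx)).continuousAt.continuousWithinAt).isBounded
  have hrange : Set.range (f ∘ exp) ⊆ f '' A := by
    rintro _ ⟨w, rfl⟩
    obtain ⟨n, hlow, hhigh⟩ := exists_one_le_norm_mul_zpow_le hq0 hq1 (exp_ne_zero w)
    exact ⟨exp w * q ^ n, ⟨by simpa using hhigh, by simpa using hlow⟩,
      apply_mul_zpow_of_apply_mul hq0 hf n (exp_ne_zero w)⟩
  have hdiff : Differentiable ℂ (f ∘ exp) := fun w ↦
    (hd _ (exp_ne_zero w)).comp w differentiableAt_exp
  simpa only [Function.comp_apply, exp_log hζ, exp_log hξ] using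
    hdiff.apply_eq_apply_of_bounded (hbdd.subset hrange) (log ζ) (log ξ)

/-- The infinite `q`-Pochhammer symbol `(a;q)_∞`, meaningful for `‖q‖ < 1`. -/
noncomputable def qPochhammerInf (q a : ℂ) : ℂ := ∏' j : ℕ, (1 - a * q ^ j)

lemma qPochhammerInf_eq_one_sub_mul (hq1 : ‖q‖ < 1) (a : ℂ) :
    qPochhammerInf q a = (1 - a) * qPochhammerInf q (a * q) := by
  have shift (j : ℕ) : 1 - a * q ^ (j + 1) = 1 - a * q * q ^ j := by ring
  have hmul : Multipliable fun j : ℕ ↦ 1 - a * q ^ (j + 1) := by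
    simpa only [shift, sub_eq_add_neg] using
      multipliable_one_add_of_summable (summable_norm_neg_mul_pow hq1 (a * q))
  simpa only [qPochhammerInf, pow_zero, mul_one, shift] using
    tprod_eq_zero_mul' (f := fun j : ℕ ↦ 1 - a * q ^ j) hmul

lemma qPochhammerInf_ne_zero {a : ℂ} (hq1 : ‖q‖ < 1) (ha : ∀ j : ℕ, a * q ^ j ≠ 1) :
    qPochhammerInf q a ≠ 0 := by
  simpa only [qPochhammerInf, ← sub_eq_add_neg] using
    tprod_one_add_ne_zero_of_summable (f := fun j : ℕ ↦ -(a * q ^ j))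
      (fun j ↦ by simpa only [← sub_eq_add_neg] using sub_ne_zero.2 (ha j).symm)
      (summable_norm_neg_mul_pow hq1 a)

lemma qPochhammerInf_self_ne_zero (hq1 : ‖q‖ < 1) : qPochhammerInf q q ≠ 0 := by
  refine qPochhammerInf_ne_zero hq1 fun j hj ↦ ?_
  rw [← pow_succ'] at hj
  exact (pow_lt_one₀ (norm_nonneg q) hq1 j.succ_ne_zero).ne (by rw [← norm_pow, hj, norm_one])

lemma differentiable_qPochhammerInf (hq1 : ‖q‖ < 1) : Differentiable ℂ (qPochhammerInf q) := by
  have hprod : HasProdLocallyUniformlyOn (fun (j : ℕ) (a : ℂ) ↦ 1 + -(a * q ^ j))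
      (fun a ↦ ∏' j : ℕ, (1 + -(a * q ^ j))) Set.univ := by
    refine hasProdLocallyUniformlyOn_of_forall_compact isOpen_univ fun K _ hK ↦ ?_
    obtain ⟨C, hC⟩ := hK.isBounded.exists_norm_le
    refine ((summable_geometric_of_lt_one (norm_nonneg q)
      hq1).mul_left C).hasProdUniformlyOn_nat_one_add hK (.of_forall fun j a ha ↦ ?_)
      fun _ ↦ by fun_prop
    rw [norm_neg, norm_mul, norm_pow]
    gcongr
    exact hC a ha
  have hd := hprod.differentiableOn (.of_forall fun _ ↦ by
    simpa only [Finset.prod_fn] using DifferentiableOn.fun_finsetProd fun _ _ ↦ by fun_prop)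
    isOpen_univ
  simp only [← sub_eq_add_neg] at hd
  exact differentiableOn_univ.1 hd

/-- The product `(ζ;q)_∞ (q/ζ;q)_∞`, which is the Jacobi theta function in multiplicative notation
up to the factor `(q;q)_∞` and a unit. -/
noncomputable def thetaProduct (q ζ : ℂ) : ℂ := qPochhammerInf q ζ * qPochhammerInf q (q / ζ)

lemma thetaProduct_eq_one_sub_mul (hq1 : ‖q‖ < 1) (ζ : ℂ) :
    thetaProduct q ζ = (1 - ζ) * (qPochhammerInf q (ζ * q) * qPochhammerInf q (q / ζ)) := by
  rw [thetaProduct, qPochhammerInf_eq_one_sub_mul hq1 ζ, mul_assoc]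

lemma mul_thetaProduct_mul_self (hq0 : q ≠ 0) (hq1 : ‖q‖ < 1) (hζ : ζ ≠ 0) :
    ζ * thetaProduct q (ζ * q) = -thetaProduct q ζ := by
  have hinv : q / (ζ * q) = ζ⁻¹ := by field_simp
  rw [thetaProduct_eq_one_sub_mul hq1 ζ, thetaProduct, hinv,
    qPochhammerInf_eq_one_sub_mul hq1 ζ⁻¹, inv_mul_eq_div]
  field_simp
  ring

lemma differentiableAt_qPochhammerInf_div (hq1 : ‖q‖ < 1) (hζ : ζ ≠ 0) :
    DifferentiableAt ℂ (fun ξ ↦ qPochhammerInf q (q / ξ)) ζ :=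
  (differentiable_qPochhammerInf hq1 (q / ζ)).comp ζ (by fun_prop (disch := assumption))

lemma differentiableAt_thetaProduct (hq1 : ‖q‖ < 1) (hζ : ζ ≠ 0) :
    DifferentiableAt ℂ (thetaProduct q) ζ :=
  (differentiable_qPochhammerInf hq1 ζ).mul (differentiableAt_qPochhammerInf_div hq1 hζ)

lemma summable_abs_pow_mul_zpow_sq_add {r : ℝ} (hr0 : 0 < r) (hr1 : r < 1) (a : ℤ) (k : ℕ) :
    Summable fun n : ℤ ↦ |(n : ℝ)| ^ k * r ^ (n ^ 2 + a * n) := by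
  set T : ℝ := -Real.log r / π
  have hT : 0 < T := div_pos (neg_pos.2 (Real.log_neg hr0 hr1)) Real.pi_pos
  have hlog : Real.log r = -π * T := by simp only [T]; field_simp
  refine (summable_pow_mul_jacobiTheta₂_term_bound (|(a : ℝ)| * T / 2) hT k).of_nonneg_of_le
    (fun n ↦ by positivity) fun n ↦ ?_
  have hlin : -(|(a : ℝ)| * |(n : ℝ)|) ≤ a * n := by
    rw [← abs_mul]; exact neg_abs_le _
  rw [← Real.rpow_intCast, Real.rpow_def_of_pos hr0, hlog, Int.cast_abs]
  gcongr ?_ * Real.exp ?_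
  push_cast
  nlinarith [mul_le_mul_of_nonneg_left hlin (mul_pos Real.pi_pos hT).le]

lemma summable_pow_mul_zpow_sq_add (hq0 : q ≠ 0) (hq1 : ‖q‖ < 1) (a : ℤ) (k : ℕ) :
    Summable fun n : ℤ ↦ (n : ℂ) ^ k * q ^ (n ^ 2 + a * n) :=
  .of_norm <| by
    simpa only [norm_mul, norm_pow, norm_zpow, norm_intCast] using
      summable_abs_pow_mul_zpow_sq_add (norm_pos_iff.2 hq0) hq1 a k

lemma tsum_two_mul_sub_one_mul_zpow_sq_sub (q : ℂ) :
    ∑' n : ℤ, (2 * (n : ℂ) - 1) * q ^ (n ^ 2 - n) = 0 :=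
  tsum_eq_zero_of_comp_equiv_eq_neg (Equiv.subLeft 1) fun n ↦ by
    rw [Equiv.subLeft_apply, show (1 - n) ^ 2 - (1 - n) = n ^ 2 - n by ring]
    push_cast
    ring

lemma tsum_intCast_mul_zpow_sq (q : ℂ) : ∑' n : ℤ, (n : ℂ) * q ^ (n ^ 2) = 0 :=
  tsum_eq_zero_of_comp_equiv_eq_neg (Equiv.neg ℤ) fun n ↦ by
    rw [Equiv.neg_apply, neg_sq, Int.cast_neg, neg_mul]

lemma hasSum_two_mul_sub_one_mul_zpow_add_mul_zpow_sq (hq0 : q ≠ 0) (hq1 : ‖q‖ < 1) (ζ : ℂ) :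
    HasSum (fun n : ℤ ↦ (2 * (n : ℂ) - 1) * q ^ (n ^ 2 - n) +
      2 * ζ * ((n : ℂ) * q ^ (n ^ 2))) 0 := by
  have hodd : Summable fun n : ℤ ↦ (2 * (n : ℂ) - 1) * q ^ (n ^ 2 - n) := by
    refine (((summable_pow_mul_zpow_sq_add hq0 hq1 (-1) 1).mul_left 2).sub
      (summable_pow_mul_zpow_sq_add hq0 hq1 (-1) 0)).congr fun n ↦ ?_
    rw [neg_one_mul, ← sub_eq_add_neg]
    ring
  have hsq : Summable fun n : ℤ ↦ (n : ℂ) * q ^ (n ^ 2) := by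
    simpa only [pow_one, zero_mul, add_zero] using summable_pow_mul_zpow_sq_add hq0 hq1 0 1
  have h := hodd.hasSum.add (hsq.hasSum.mul_left (2 * ζ))
  rwa [tsum_two_mul_sub_one_mul_zpow_sq_sub, tsum_intCast_mul_zpow_sq, mul_zero, add_zero] at h

/-- The `n`-th term of the partial fraction expansion, with the two series merged. -/
noncomputable def partialFractionTerm (q : ℂ) (n : ℤ) (ζ : ℂ) : ℂ :=
  q ^ (n ^ 2 + n) / (1 - ζ * q ^ n) ^ 2 + 2 * ((n : ℂ) * q ^ (n ^ 2 + n) / (1 - ζ * q ^ n))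

lemma partialFractionTerm_sub_one_mul_self (hq0 : q ≠ 0) {n : ℤ} (hn : ζ * q ^ n ≠ 1) :
    partialFractionTerm q (n - 1) (ζ * q) = ζ ^ 2 * partialFractionTerm q n ζ +
      ((2 * (n : ℂ) - 1) * q ^ (n ^ 2 - n) + 2 * ζ * ((n : ℂ) * q ^ (n ^ 2))) := by
  have hpole : 1 - ζ * q ^ n ≠ 0 := sub_ne_zero.2 hn.symm
  have hsq : q ^ (n ^ 2) = q ^ (n ^ 2 - n) * q ^ n := by rw [← zpow_add₀ hq0, sub_add_cancel]
  rw [partialFractionTerm, partialFractionTerm, show (n - 1) ^ 2 + (n - 1) = n ^ 2 - n by ring,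
    mul_assoc ζ q, ← zpow_one_add₀ hq0, add_sub_cancel, zpow_add₀ hq0 (n ^ 2) n, hsq]
  generalize q ^ (n ^ 2 - n) = w
  generalize q ^ n = x at *
  push_cast
  field_simp
  ring

lemma differentiableAt_partialFractionTerm {n : ℤ} (hn : ζ * q ^ n ≠ 1) :
    DifferentiableAt ℂ (partialFractionTerm q n) ζ := by
  have hpole : 1 - ζ * q ^ n ≠ 0 := sub_ne_zero.2 hn.symm
  unfold partialFractionTerm
  fun_prop (disch := simpa using hpole)

lemma norm_zpow_div_sq_le {c : ℝ} (hc : 0 < c) {n : ℤ} (h : c ≤ ‖1 - ζ * q ^ n‖) :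
    ‖q ^ (n ^ 2 + n) / (1 - ζ * q ^ n) ^ 2‖ ≤ ‖q‖ ^ (n ^ 2 + n) / c ^ 2 := by
  rw [norm_div, norm_pow, norm_zpow]
  gcongr

lemma norm_intCast_mul_zpow_div_le {c : ℝ} (hc : 0 < c) {n : ℤ} (h : c ≤ ‖1 - ζ * q ^ n‖) :
    ‖(n : ℂ) * q ^ (n ^ 2 + n) / (1 - ζ * q ^ n)‖ ≤ |(n : ℝ)| * ‖q‖ ^ (n ^ 2 + n) / c := by
  rw [norm_div, norm_mul, norm_zpow, norm_intCast]
  gcongr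

lemma norm_partialFractionTerm_le {c : ℝ} (hc : 0 < c) {n : ℤ} (h : c ≤ ‖1 - ζ * q ^ n‖) :
    ‖partialFractionTerm q n ζ‖ ≤
      ‖q‖ ^ (n ^ 2 + n) / c ^ 2 + 2 * (|(n : ℝ)| * ‖q‖ ^ (n ^ 2 + n) / c) := by
  refine (norm_add_le _ _).trans ?_
  rw [norm_mul 2, Complex.norm_two]
  gcongr
  exacts [norm_zpow_div_sq_le hc h, norm_intCast_mul_zpow_div_le hc h]

lemma summable_norm_zpow_div (hq0 : q ≠ 0) (hq1 : ‖q‖ < 1) (b : ℝ) :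
    Summable fun n : ℤ ↦ ‖q‖ ^ (n ^ 2 + n) / b := by
  simpa only [pow_zero, one_mul] using
    (summable_abs_pow_mul_zpow_sq_add (norm_pos_iff.2 hq0) hq1 1 0).div_const b

lemma summable_abs_mul_norm_zpow_div (hq0 : q ≠ 0) (hq1 : ‖q‖ < 1) (b : ℝ) :
    Summable fun n : ℤ ↦ |(n : ℝ)| * ‖q‖ ^ (n ^ 2 + n) / b := by
  simpa only [pow_one, one_mul] using
    (summable_abs_pow_mul_zpow_sq_add (norm_pos_iff.2 hq0) hq1 1 1).div_const b

lemma summable_zpow_div_and_summable_intCast_mul_zpow_div (hq0 : q ≠ 0) (hq1 : ‖q‖ < 1)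
    (hζ : ζ ≠ 0) (hreg : ∀ n : ℤ, ζ * q ^ n ≠ 1) :
    (Summable fun n : ℤ ↦ q ^ (n ^ 2 + n) / (1 - ζ * q ^ n) ^ 2) ∧
      Summable fun n : ℤ ↦ (n : ℂ) * q ^ (n ^ 2 + n) / (1 - ζ * q ^ n) := by
  obtain ⟨c, hc, hbound⟩ := exists_pos_eventually_le_norm_one_sub_mul_zpow hq0 hq1 hζ
    (s := Set.univ) fun n _ ↦ hreg n
  have hle (n : ℤ) : c ≤ ‖1 - ζ * q ^ n‖ := hbound.self_of_nhds n (Set.mem_univ n)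
  exact ⟨.of_norm_bounded (summable_norm_zpow_div hq0 hq1 _) fun n ↦ norm_zpow_div_sq_le hc (hle n),
    .of_norm_bounded (summable_abs_mul_norm_zpow_div hq0 hq1 _) fun n ↦
      norm_intCast_mul_zpow_div_le hc (hle n)⟩

lemma summable_partialFractionTerm (hq0 : q ≠ 0) (hq1 : ‖q‖ < 1) (hζ : ζ ≠ 0)
    (hreg : ∀ n : ℤ, ζ * q ^ n ≠ 1) : Summable fun n ↦ partialFractionTerm q n ζ :=
  have h := summable_zpow_div_and_summable_intCast_mul_zpow_div hq0 hq1 hζ hreg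
  h.1.add (h.2.mul_left 2)

lemma differentiableAt_tsum_partialFractionTerm (hq0 : q ≠ 0) (hq1 : ‖q‖ < 1)
    (hζ : ζ ≠ 0) {s : Set ℤ} (hs : ∀ n ∈ s, ζ * q ^ n ≠ 1) :
    DifferentiableAt ℂ (fun ξ ↦ ∑' n : s, partialFractionTerm q n ξ) ζ := by
  obtain ⟨c, hc, hbound⟩ := exists_pos_eventually_le_norm_one_sub_mul_zpow hq0 hq1 hζ hs
  obtain ⟨U, hU, hUo, hζU⟩ := eventually_nhds_iff.1 hbound
  have hmajorant := (summable_norm_zpow_div hq0 hq1 (c ^ 2)).add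
    ((summable_abs_mul_norm_zpow_div hq0 hq1 c).mul_left 2)
  refine (differentiableOn_tsum_of_summable_norm (hmajorant.subtype s) ?_ hUo
    fun n ξ hξ ↦ norm_partialFractionTerm_le hc (hU ξ hξ n.1 n.2)).differentiableAt
      (hUo.mem_nhds hζU)
  intro n ξ hξ
  have hpole : 1 - ξ * q ^ n.1 ≠ 0 := norm_pos_iff.1 (hc.trans_le (hU ξ hξ n.1 n.2))
  exact (differentiableAt_partialFractionTerm
    (sub_ne_zero.1 hpole).symm).differentiableWithinAt

lemma tsum_partialFractionTerm_mul_self (hq0 : q ≠ 0) (hq1 : ‖q‖ < 1) (hζ : ζ ≠ 0)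
    (hreg : ∀ n : ℤ, ζ * q ^ n ≠ 1) :
    ∑' n, partialFractionTerm q n (ζ * q) = ζ ^ 2 * ∑' n, partialFractionTerm q n ζ := by
  rw [← (Equiv.subRight (1 : ℤ)).tsum_eq fun n ↦ partialFractionTerm q n (ζ * q)]
  have hshift (n : ℤ) := partialFractionTerm_sub_one_mul_self hq0 (hreg n)
  simpa only [Equiv.subRight_apply, hshift, add_zero] using
    (((summable_partialFractionTerm hq0 hq1 hζ hreg).hasSum.mul_left (ζ ^ 2)).add
      (hasSum_two_mul_sub_one_mul_zpow_add_mul_zpow_sq hq0 hq1 ζ)).tsum_eq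

open Classical in
/-- The holomorphic extension to `ℂ ∖ {0}` of the theta product squared times the sum of the
partial fraction expansion. At the removable singularities, the integral powers of `q`, its value
is prescribed to be `(q;q)_∞⁴`. -/
noncomputable def thetaSqMulSum (q ζ : ℂ) : ℂ :=
  if ∃ n : ℤ, ζ * q ^ n = 1 then qPochhammerInf q q ^ 4
  else thetaProduct q ζ ^ 2 * ∑' n, partialFractionTerm q n ζ

lemma thetaSqMulSum_of_forall_ne (hreg : ∀ n : ℤ, ζ * q ^ n ≠ 1) :
    thetaSqMulSum q ζ = thetaProduct q ζ ^ 2 * ∑' n, partialFractionTerm q n ζ :=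
  if_neg (not_exists.2 hreg)

lemma thetaSqMulSum_one (q : ℂ) : thetaSqMulSum q 1 = qPochhammerInf q q ^ 4 :=
  if_pos ⟨0, by simp⟩

lemma thetaSqMulSum_mul_self (hq0 : q ≠ 0) (hq1 : ‖q‖ < 1) (hζ : ζ ≠ 0) :
    thetaSqMulSum q (ζ * q) = thetaSqMulSum q ζ := by
  by_cases hreg : ∃ n : ℤ, ζ * q ^ n = 1
  · rw [thetaSqMulSum, thetaSqMulSum, if_pos hreg,
      if_pos ((exists_mul_self_mul_zpow_eq_one_iff hq0).2 hreg)]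
  · rw [thetaSqMulSum, thetaSqMulSum, if_neg hreg,
      if_neg (mt (exists_mul_self_mul_zpow_eq_one_iff hq0).1 hreg),
      tsum_partialFractionTerm_mul_self hq0 hq1 hζ (not_exists.1 hreg), ← mul_assoc, ← mul_pow,
      mul_comm _ ζ, mul_thetaProduct_mul_self hq0 hq1 hζ, neg_sq]

lemma differentiableAt_thetaSqMulSum_of_forall_ne (hq0 : q ≠ 0) (hq1 : ‖q‖ < 1)
    (hζ : ζ ≠ 0) (hreg : ∀ n : ℤ, ζ * q ^ n ≠ 1) : DifferentiableAt ℂ (thetaSqMulSum q) ζ := by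
  have hsum := differentiableAt_tsum_partialFractionTerm hq0 hq1 hζ (s := Set.univ)
    fun n _ ↦ hreg n
  rw [funext fun ξ ↦ tsum_univ fun n ↦ partialFractionTerm q n ξ] at hsum
  obtain ⟨c, hc, hbound⟩ := exists_pos_eventually_le_norm_one_sub_mul_zpow hq0 hq1 hζ
    (s := Set.univ) fun n _ ↦ hreg n
  refine (((differentiableAt_thetaProduct hq1 hζ).pow 2).mul hsum).congr_of_eventuallyEq ?_
  filter_upwards [hbound] with ξ hξ
  refine thetaSqMulSum_of_forall_ne fun n hn ↦ hc.not_ge ?_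
  simpa only [hn, sub_self, norm_zero] using hξ n (Set.mem_univ n)

lemma thetaProduct_one (hq1 : ‖q‖ < 1) : thetaProduct q 1 = 0 := by
  rw [thetaProduct_eq_one_sub_mul hq1, sub_self, zero_mul]

lemma thetaProduct_sq_mul_tsum (hq0 : q ≠ 0) (hq1 : ‖q‖ < 1) (hζ : ζ ≠ 0)
    (hreg : ∀ n : ℤ, ζ * q ^ n ≠ 1) :
    thetaProduct q ζ ^ 2 * ∑' n, partialFractionTerm q n ζ =
      (qPochhammerInf q (ζ * q) * qPochhammerInf q (q / ζ)) ^ 2 +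
        thetaProduct q ζ ^ 2 * ∑' n : ({0}ᶜ : Set ℤ), partialFractionTerm q n ζ := by
  have hpole : 1 - ζ ≠ 0 := sub_ne_zero.2 (by simpa using (hreg 0).symm)
  have hzero : partialFractionTerm q 0 ζ = 1 / (1 - ζ) ^ 2 := by simp [partialFractionTerm]
  have hsplit := (summable_partialFractionTerm hq0 hq1 hζ hreg).tsum_subtype_add_tsum_subtype_compl
    {0}
  rw [tsum_singleton 0 (partialFractionTerm q · ζ), hzero] at hsplit
  rw [← hsplit, mul_add, add_left_inj, thetaProduct_eq_one_sub_mul hq1 ζ, mul_pow]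
  field_simp

lemma differentiableAt_thetaSqMulSum_one (hq0 : q ≠ 0) (hq1 : ‖q‖ < 1) :
    DifferentiableAt ℂ (thetaSqMulSum q) 1 := by
  have hreg (n : ℤ) (hn : n ∈ ({0}ᶜ : Set ℤ)) : 1 * q ^ n ≠ 1 := by
    rw [one_mul]; exact zpow_ne_one_of_norm_lt_one hq0 hq1 hn
  obtain ⟨c, hc, hbound⟩ :=
    exists_pos_eventually_le_norm_one_sub_mul_zpow hq0 hq1 one_ne_zero hreg
  have hpole : DifferentiableAt ℂ
      (fun ξ ↦ (qPochhammerInf q (ξ * q) * qPochhammerInf q (q / ξ)) ^ 2) 1 :=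
    (((differentiable_qPochhammerInf hq1).comp (differentiable_id.mul_const q) 1).mul
      (differentiableAt_qPochhammerInf_div hq1 one_ne_zero)).pow 2
  have htail : DifferentiableAt ℂ (fun ξ ↦ thetaProduct q ξ ^ 2 *
      ∑' n : ({0}ᶜ : Set ℤ), partialFractionTerm q n ξ) 1 :=
    ((differentiableAt_thetaProduct hq1 one_ne_zero).pow 2).mul
      (differentiableAt_tsum_partialFractionTerm hq0 hq1 one_ne_zero hreg)
  refine (hpole.add htail).congr_of_eventuallyEq ?_
  filter_upwards [hbound, isOpen_ne.mem_nhds one_ne_zero] with ξ hξ hξ0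
  rcases eq_or_ne ξ 1 with rfl | hξ1
  · simp only [Pi.add_apply, thetaSqMulSum_one, thetaProduct_one hq1, one_mul, div_one]
    ring
  · have hξreg (n : ℤ) : ξ * q ^ n ≠ 1 := by
      rcases eq_or_ne n 0 with rfl | hn
      · rwa [zpow_zero, mul_one]
      · intro h
        refine hc.not_ge ?_
        simpa only [h, sub_self, norm_zero] using hξ n hn
    rw [thetaSqMulSum_of_forall_ne hξreg, thetaProduct_sq_mul_tsum hq0 hq1 hξ0 hξreg]
    rfl

lemma differentiableAt_thetaSqMulSum (hq0 : q ≠ 0) (hq1 : ‖q‖ < 1) (hζ : ζ ≠ 0) :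
    DifferentiableAt ℂ (thetaSqMulSum q) ζ := by
  by_cases hreg : ∃ n : ℤ, ζ * q ^ n = 1
  · obtain ⟨n, hn⟩ := hreg
    have hone : DifferentiableAt ℂ (thetaSqMulSum q) (ζ * q ^ n) :=
      hn ▸ differentiableAt_thetaSqMulSum_one hq0 hq1
    refine (hone.comp ζ (f := (· * q ^ n)) (by fun_prop)).congr_of_eventuallyEq ?_
    filter_upwards [isOpen_ne.mem_nhds hζ] with ξ hξ
    exact (apply_mul_zpow_of_apply_mul hq0
      (fun _ ↦ thetaSqMulSum_mul_self hq0 hq1) n hξ).symm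
  · exact differentiableAt_thetaSqMulSum_of_forall_ne hq0 hq1 hζ (not_exists.1 hreg)

theorem thetaProduct_sq_mul_partial_fractions (hq0 : q ≠ 0) (hq1 : ‖q‖ < 1)
    (hζ : ζ ≠ 0) (hreg : ∀ n : ℤ, ζ * q ^ n ≠ 1) :
    thetaProduct q ζ ^ 2 * ((∑' n : ℤ, q ^ (n ^ 2 + n) / (1 - ζ * q ^ n) ^ 2) +
      2 * ∑' n : ℤ, (n : ℂ) * q ^ (n ^ 2 + n) / (1 - ζ * q ^ n)) = qPochhammerInf q q ^ 4 := by
  obtain ⟨hdouble, hsimple⟩ :=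
    summable_zpow_div_and_summable_intCast_mul_zpow_div hq0 hq1 hζ hreg
  rw [← tsum_mul_left, ← hdouble.tsum_add (hsimple.mul_left 2)]
  calc thetaProduct q ζ ^ 2 * ∑' n, partialFractionTerm q n ζ
      = thetaSqMulSum q ζ := (thetaSqMulSum_of_forall_ne hreg).symm
    _ = thetaSqMulSum q 1 := apply_eq_apply_of_apply_mul_self hq0 hq1
        (fun _ ↦ differentiableAt_thetaSqMulSum hq0 hq1)
        (fun _ ↦ thetaSqMulSum_mul_self hq0 hq1) hζ one_ne_zero
    _ = qPochhammerInf q q ^ 4 := thetaSqMulSum_one q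

end PartialFractions

lemma norm_exp_two_pi_I_mul_lt_one {τ : ℂ} (hτ : 0 < τ.im) : ‖exp (2 * π * I * τ)‖ < 1 :=
  UpperHalfPlane.norm_exp_two_pi_I_lt_one ⟨τ, hτ⟩

lemma exp_two_pi_I_mul_zpow_ne_one {z τ : ℂ} (hz : ∀ m n : ℤ, z ≠ m + n * τ) (n : ℤ) :
    exp (2 * π * I * z) * exp (2 * π * I * τ) ^ n ≠ 1 := by
  rw [← exp_int_mul, ← exp_add]
  intro h
  obtain ⟨m, hm⟩ := exp_eq_one_iff.1 h
  refine hz m (-n) (mul_left_cancel₀ two_pi_I_ne_zero ?_)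
  push_cast
  linear_combination hm

lemma dedekindEta_eq_exp_mul_qPochhammerInf (τ : ℂ) :
    dedekindEta τ =
      exp (π * I * τ / 12) * qPochhammerInf (exp (2 * π * I * τ)) (exp (2 * π * I * τ)) := by
  simp only [dedekindEta, qPochhammerInf, pow_succ']

lemma dedekindEta_ne_zero {τ : ℂ} (hτ : 0 < τ.im) : dedekindEta τ ≠ 0 := by
  rw [dedekindEta_eq_exp_mul_qPochhammerInf]
  exact mul_ne_zero (exp_ne_zero _)
    (qPochhammerInf_self_ne_zero (norm_exp_two_pi_I_mul_lt_one hτ))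

lemma jtheta_eq_mul_thetaProduct (z τ : ℂ) :
    jtheta z τ = -I * exp (-π * I * z) * exp (π * I * τ / 4) *
      qPochhammerInf (exp (2 * π * I * τ)) (exp (2 * π * I * τ)) *
      thetaProduct (exp (2 * π * I * τ)) (exp (2 * π * I * z)) := by
  have hinv : exp (-2 * π * I * z) = (exp (2 * π * I * z))⁻¹ := by
    rw [← exp_neg]; ring_nf
  rw [jtheta, hinv]
  simp only [thetaProduct, qPochhammerInf, pow_succ', div_eq_inv_mul, mul_assoc]

lemma jtheta_sq_mul_qPochhammerInf (z τ : ℂ) :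
    jtheta z τ ^ 2 * qPochhammerInf (exp (2 * π * I * τ)) (exp (2 * π * I * τ)) ^ 4 =
      -dedekindEta τ ^ 6 * (exp (2 * π * I * z))⁻¹ *
        thetaProduct (exp (2 * π * I * τ)) (exp (2 * π * I * z)) ^ 2 := by
  have hz : exp (-π * I * z) ^ 2 = (exp (2 * π * I * z))⁻¹ := by
    rw [← exp_neg, ← exp_nat_mul]; push_cast; ring_nf
  have hτ : exp (π * I * τ / 4) ^ 2 = exp (π * I * τ / 12) ^ 6 := by
    rw [← exp_nat_mul, ← exp_nat_mul]; push_cast; ring_nf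
  rw [jtheta_eq_mul_thetaProduct, dedekindEta_eq_exp_mul_qPochhammerInf]
  simp only [mul_pow, hz, hτ, neg_sq, I_sq]
  ring

theorem partial_fractions_N_two_general (z τ : ℂ) (hτ : 0 < τ.im)
    (hz : ∀ m n : ℤ, z ≠ m + n * τ) :
    -dedekindEta τ ^ 6 * (exp (2 * π * I * z))⁻¹ / jtheta z τ ^ 2 =
      (∑' n : ℤ, exp (2 * π * I * τ) ^ (n ^ 2 + n) /
          (1 - exp (2 * π * I * z) * exp (2 * π * I * τ) ^ n) ^ 2) +
        2 * ∑' n : ℤ, (n : ℂ) * exp (2 * π * I * τ) ^ (n ^ 2 + n) /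
          (1 - exp (2 * π * I * z) * exp (2 * π * I * τ) ^ n) := by
  set q := exp (2 * π * I * τ)
  set ζ := exp (2 * π * I * z)
  have hq1 : ‖q‖ < 1 := norm_exp_two_pi_I_mul_lt_one hτ
  have hζ : ζ ≠ 0 := exp_ne_zero _
  have hconst := thetaProduct_sq_mul_partial_fractions (exp_ne_zero _) hq1 hζ
    (exp_two_pi_I_mul_zpow_ne_one hz)
  have hP : thetaProduct q ζ ^ 2 ≠ 0 :=
    left_ne_zero_of_mul (hconst.trans_ne (pow_ne_zero 4 (qPochhammerInf_self_ne_zero hq1)))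
  have htheta := jtheta_sq_mul_qPochhammerInf z τ
  have hnum : -dedekindEta τ ^ 6 * ζ⁻¹ ≠ 0 :=
    mul_ne_zero (neg_ne_zero.2 (pow_ne_zero 6 (dedekindEta_ne_zero hτ))) (inv_ne_zero hζ)
  have htheta0 : jtheta z τ ^ 2 ≠ 0 := left_ne_zero_of_mul (htheta.trans_ne (mul_ne_zero hnum hP))
  rw [div_eq_iff htheta0]
  apply mul_right_cancel₀ hP
  rw [← htheta, ← hconst]
  ring

lemma ne_intCast_add_intCast_mul_of_im_pos_of_im_lt {z τ : ℂ} (hz : 0 < z.im) (hzτ : z.im < τ.im)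
    (m n : ℤ) : z ≠ m + n * τ := by
  rintro rfl
  have hτ : 0 < τ.im := hz.trans hzτ
  simp only [add_im, intCast_im, zero_add, mul_im, intCast_re, zero_mul, add_zero] at hz hzτ
  have hn0 : 0 < n := by exact_mod_cast (pos_iff_pos_of_mul_pos hz).2 hτ
  have hn1 : n < 1 := by exact_mod_cast (mul_lt_iff_lt_one_left hτ).1 hzτ
  omega

theorem partial_fractions_N_two (z τ : ℂ) (hτ : 0 < τ.im) (hz : 0 < z.im)
    (hzτ : z.im < τ.im) :
    -dedekindEta τ ^ 6 * (Complex.exp (2 * (Real.pi : ℂ) * I * z))⁻¹ / jtheta z τ ^ 2 =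
      (∑' n : ℤ, Complex.exp (2 * (Real.pi : ℂ) * I * τ) ^ (n ^ 2 + n) /
          (1 - Complex.exp (2 * (Real.pi : ℂ) * I * z) *
            Complex.exp (2 * (Real.pi : ℂ) * I * τ) ^ n) ^ 2) +
        2 * ∑' n : ℤ, (n : ℂ) * Complex.exp (2 * (Real.pi : ℂ) * I * τ) ^ (n ^ 2 + n) /
          (1 - Complex.exp (2 * (Real.pi : ℂ) * I * z) *
            Complex.exp (2 * (Real.pi : ℂ) * I * τ) ^ n) := by
  exact partial_fractions_N_two_general z τ hτ
    (ne_intCast_add_intCast_mul_of_im_pos_of_im_lt hz hzτ)
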